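/- arXiv:2208.01108 — 3 statements merged into one kernel-verified Lean document; each statement's English description precedes it below -/
import Mathlib

section
/- Let X be a real reflexive Banach space, let A : X → X* be a pseudomonotone, bounded, and coercive operator, and let b ∈ X*. Then there exists a solution u ∈ X of the equation A u = b. (Theorem 2.10, the main theorem on pseudomonotone operators.) -/
open Filter Topology
section brouwer
open MeasureTheory Metric Set

theorem aux_det_poly {n : ℕ} (B : EuclideanSpace ℝ (Fin n) →L[ℝ] EuclideanSpace ℝ (Fin n)) :
    ∃ p : Polynomial ℝ, p.natDegree ≤ n ∧ ∀ t : ℝ, p.eval t = (1 + t • B).det := by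
  classical
  let bs := (EuclideanSpace.basisFun (Fin n) ℝ).toBasis
  let M := LinearMap.toMatrix bs bs (B : EuclideanSpace ℝ (Fin n) →ₗ[ℝ] EuclideanSpace ℝ (Fin n))
  refine ⟨Matrix.det ((Polynomial.X : Polynomial ℝ) • M.map Polynomial.C
    + (1 : Matrix (Fin n) (Fin n) ℝ).map Polynomial.C), ?_, fun t => ?_⟩
  · simpa using Polynomial.natDegree_det_X_add_C_le M 1
  · rw [ContinuousLinearMap.det, ← LinearMap.det_toMatrix bs, ← Polynomial.coe_evalRingHom,
      RingHom.map_det]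
    congr 1
    ext i j
    have : ((1 + t • B : EuclideanSpace ℝ (Fin n) →L[ℝ] EuclideanSpace ℝ (Fin n)) :
      EuclideanSpace ℝ (Fin n) →ₗ[ℝ] EuclideanSpace ℝ (Fin n)) = LinearMap.id + t • (B : EuclideanSpace ℝ (Fin n) →ₗ[ℝ] EuclideanSpace ℝ (Fin n)) := rfl
    have h2 : LinearMap.toMatrix bs bs (LinearMap.id + t • (B : EuclideanSpace ℝ (Fin n) →ₗ[ℝ] EuclideanSpace ℝ (Fin n))) = 1 + t • M := by
      rw [LinearEquiv.map_add, LinearEquiv.map_smul, LinearMap.toMatrix_id]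
    rw [this, h2]
    rcases eq_or_ne i j with rfl | hij
    · simp [Matrix.map_apply, add_comm]; ring
    · simp [Matrix.map_apply, hij]; ring

theorem aux_poly {n : ℕ} (B : EuclideanSpace ℝ (Fin n) →L[ℝ] EuclideanSpace ℝ (Fin n))
    (x g : EuclideanSpace ℝ (Fin n)) (K : ℝ) (m : ℕ) :
    ∃ p : Polynomial ℝ, p.natDegree ≤ 2 * m + n ∧
      ∀ t : ℝ, p.eval t = (1 + t • B).det * (1 - ‖x + t • g‖ ^ 2 / K) ^ m := by
  obtain ⟨p, hp, hpe⟩ := aux_det_poly B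
  let q : Polynomial ℝ := Polynomial.C (1 - ‖x‖ ^ 2 / K) +
    Polynomial.C (- (2 * inner ℝ x g) / K) * Polynomial.X +
      Polynomial.C (- ‖g‖ ^ 2 / K) * Polynomial.X ^ 2
  have hq : q.natDegree ≤ 2 := by
    simp only [q]; compute_degree
  refine ⟨p * q ^ m, ?_, fun t => ?_⟩
  · refine Polynomial.natDegree_mul_le.trans ?_
    have := (Polynomial.natDegree_pow_le (p := q) (n := m)).trans (Nat.mul_le_mul_left m hq)
    omega
  · rw [Polynomial.eval_mul, hpe, Polynomial.eval_pow]
    congr 2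
    rw [norm_add_sq_real, inner_smul_right, norm_smul, mul_pow, Real.norm_eq_abs, sq_abs]
    simp [q]; ring

/-- Lagrange weights -/
theorem aux_weights (N : ℕ) (ε : ℝ) (hε : 0 < ε) :
    ∃ (τ w : ℕ → ℝ), (∀ i ∈ Finset.range (N+1), 0 < τ i ∧ τ i ≤ ε) ∧
      ∀ p : Polynomial ℝ, p.natDegree ≤ N →
        p.eval 1 = ∑ i ∈ Finset.range (N+1), w i * p.eval (τ i) := by
  let τ : ℕ → ℝ := fun i => ε / (i + 1)
  have hinj : Set.InjOn τ (Finset.range (N+1)) := by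
    intro i _ j _ h
    simp only [τ] at h
    rw [div_eq_div_iff (by positivity) (by positivity)] at h
    have := mul_left_cancel₀ hε.ne' h
    have h2 : (i : ℝ) = j := by linarith
    exact_mod_cast h2
  refine ⟨τ, fun i => (Lagrange.basis (Finset.range (N+1)) τ i).eval 1, fun i _ => ?_, fun p hp => ?_⟩
  · refine ⟨by simp only [τ]; positivity, ?_⟩
    exact div_le_self hε.le (by simp)
  · have hd : p.degree < (Finset.range (N+1)).card := by
      rw [Finset.card_range]
      exact (Polynomial.degree_le_of_natDegree_le hp).trans_lt (by exact_mod_cast Nat.lt_succ_self N)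
    conv_lhs => rw [Lagrange.eq_interpolate hinj hd]
    rw [Lagrange.interpolate_apply, Polynomial.eval_finsetSum]
    simp [mul_comm]

/-- change of variables for small t -/
theorem aux_small {n : ℕ} (g : EuclideanSpace ℝ (Fin n) → EuclideanSpace ℝ (Fin n))
    (hg : ContDiff ℝ 1 g) (R : ℝ) (hR : ∀ x, R < ‖x‖ → g x = 0) :
    ∃ ε > 0, ∀ t : ℝ, 0 < t → t ≤ ε → ∀ φ : EuclideanSpace ℝ (Fin n) → ℝ,
      ∫ x in closedBall 0 R, (1 + t • fderiv ℝ g x).det * φ (x + t • g x)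
        = ∫ x in closedBall 0 R, φ x := by
  have hcs : HasCompactSupport g := HasCompactSupport.intro (isCompact_closedBall 0 R)
    (fun x hx => hR x (by simpa using hx))
  obtain ⟨C, hC⟩ := hg.lipschitzWith_of_hasCompactSupport hcs (by simp)
  have hdet : ContinuousAt (fun B : EuclideanSpace ℝ (Fin n) →L[ℝ] EuclideanSpace ℝ (Fin n) => B.det) 1 :=
    ContinuousLinearMap.continuous_det.continuousAt
  have h1 : (1 : EuclideanSpace ℝ (Fin n) →L[ℝ] EuclideanSpace ℝ (Fin n)).det = 1 := by
    simp [ContinuousLinearMap.det]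
  have hpos := hdet.eventually (lt_mem_nhds (show (0:ℝ) < (1 : EuclideanSpace ℝ (Fin n) →L[ℝ] EuclideanSpace ℝ (Fin n)).det by rw [h1]; norm_num))
  obtain ⟨δ, hδ, hball⟩ := Metric.eventually_nhds_iff.1 hpos
  refine ⟨min (1/2) (δ/2) / (C + 1), by positivity, fun t ht hte φ => ?_⟩
  have hC0 : (0:ℝ) < C + 1 := by positivity
  rw [le_div_iff₀ hC0] at hte
  have htC1 : t * C < 1 := by
    have := hte.trans (min_le_left _ _); nlinarith
  have htC2 : t * C < δ := by
    have := hte.trans (min_le_right _ _); nlinarith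
  have hlip : ∀ x y, ‖g x - g y‖ ≤ C * ‖x - y‖ := fun x y => by
    simpa [dist_eq_norm] using hC.dist_le_mul x y
  have hinj : Function.Injective (fun x => x + t • g x) := by
    intro x y hxy
    simp only at hxy
    have h2 : x - y = t • (g y - g x) := by
      rw [smul_sub]; rw [sub_eq_sub_iff_add_eq_add, hxy, add_comm]
    have h3 : ‖x - y‖ ≤ (t * C) * ‖x - y‖ := by
      conv_lhs => rw [h2, norm_smul, Real.norm_of_nonneg ht.le]
      rw [mul_assoc, norm_sub_rev x y]
      exact mul_le_mul_of_nonneg_left (hlip y x) ht.le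
    have h4 : ‖x - y‖ = 0 := by
      by_contra hne
      have : 0 < ‖x - y‖ := lt_of_le_of_ne (norm_nonneg _) (Ne.symm hne)
      nlinarith
    exact sub_eq_zero.1 (norm_eq_zero.1 h4)
  have hsurj : Function.Surjective (fun x => x + t • g x) := by
    intro y
    have hct : ContractingWith (t.toNNReal * C) (fun x => y - t • g x) := by
      refine ⟨by rw [← NNReal.coe_lt_coe]; simpa [Real.coe_toNNReal _ ht.le] using htC1, LipschitzWith.of_dist_le_mul fun a b => ?_⟩
      rw [dist_eq_norm, dist_eq_norm]
      have : y - t • g a - (y - t • g b) = t • (g b - g a) := by rw [smul_sub]; abel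
      rw [this, norm_smul, Real.norm_of_nonneg ht.le, norm_sub_rev a b]
      rw [NNReal.coe_mul, Real.coe_toNNReal _ ht.le]
      rw [mul_assoc]
      exact mul_le_mul_of_nonneg_left (hlip b a) ht.le
    refine ⟨hct.fixedPoint, ?_⟩
    have := hct.fixedPoint_isFixedPt
    rw [Function.IsFixedPt] at this
    simp only
    nth_rewrite 1 [← this]
    abel
  have himg : (fun x => x + t • g x) '' closedBall 0 R = closedBall 0 R := by
    have hout : ∀ x, x ∉ closedBall (0 : EuclideanSpace ℝ (Fin n)) R → x + t • g x = x := fun x hx => by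
      rw [hR x (by simpa using hx)]; simp
    ext y
    constructor
    · rintro ⟨x, hx, rfl⟩
      by_contra hy
      have := hinj (hout _ hy)
      simp only at this hy
      rw [this] at hy
      exact hy hx
    · intro hy
      obtain ⟨x, rfl⟩ := hsurj y
      refine ⟨x, ?_, rfl⟩
      by_contra hx
      simp only [hout x hx] at hy
      exact hx hy
  have hder : ∀ x ∈ closedBall (0 : EuclideanSpace ℝ (Fin n)) R, HasFDerivWithinAt (fun x => x + t • g x)
      (1 + t • fderiv ℝ g x) (closedBall 0 R) x := fun x _ => by
    have := ((hg.differentiable (by simp)) x).hasFDerivAt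
    exact ((hasFDerivAt_id x).add (this.const_smul t)).hasFDerivWithinAt
  have key := integral_image_eq_integral_abs_det_fderiv_smul volume (isClosed_closedBall (x := (0: EuclideanSpace ℝ (Fin n))) (ε := R)).measurableSet hder hinj.injOn φ
  rw [himg] at key
  rw [key]
  congr 1
  ext x
  have : 0 < (1 + t • fderiv ℝ g x).det := by
    apply hball
    rw [dist_eq_norm, add_sub_cancel_left, norm_smul, Real.norm_of_nonneg ht.le]
    refine lt_of_le_of_lt ?_ htC2
    exact mul_le_mul_of_nonneg_left (norm_fderiv_le_of_lipschitz ℝ hC) ht.le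
  rw [abs_of_pos this, smul_eq_mul]

theorem aux_one {n : ℕ} (g : EuclideanSpace ℝ (Fin n) → EuclideanSpace ℝ (Fin n))
    (hg : ContDiff ℝ 1 g) (R : ℝ) (hR : ∀ x, R < ‖x‖ → g x = 0) (K : ℝ) (m : ℕ) :
    ∫ x in closedBall 0 R, (1 + fderiv ℝ g x).det * (1 - ‖x + g x‖ ^ 2 / K) ^ m
        = ∫ x in closedBall (0 : EuclideanSpace ℝ (Fin n)) R, (1 - ‖x‖ ^ 2 / K) ^ m := by
  obtain ⟨ε, hε, hsm⟩ := aux_small g hg R hR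
  obtain ⟨τ, w, hτ, hw⟩ := aux_weights (2 * m + n) ε hε
  have hint : ∀ t : ℝ, IntegrableOn (fun x => (1 + t • fderiv ℝ g x).det * (1 - ‖x + t • g x‖ ^ 2 / K) ^ m)
      (closedBall 0 R) := fun t => by
    have hc1 : Continuous (fderiv ℝ g) := hg.continuous_fderiv (by simp)
    have hc2 := hg.continuous
    have hc3 : Continuous fun x => (1 + t • fderiv ℝ g x).det :=
      ContinuousLinearMap.continuous_det.comp (by fun_prop)
    refine ContinuousOn.integrableOn_compact (isCompact_closedBall _ _) (Continuous.continuousOn ?_)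
    fun_prop
  have e1 : ∀ x, (1 + fderiv ℝ g x).det * (1 - ‖x + g x‖ ^ 2 / K) ^ m =
      ∑ i ∈ Finset.range (2 * m + n + 1), w i * ((1 + τ i • fderiv ℝ g x).det * (1 - ‖x + τ i • g x‖ ^ 2 / K) ^ m) := by
    intro x
    obtain ⟨p, hp, hpe⟩ := aux_poly (fderiv ℝ g x) x (g x) K m
    have := hw p hp
    simp only [hpe, one_smul] at this
    exact this
  have hw1 : 1 = ∑ i ∈ Finset.range (2 * m + n + 1), w i := by
    simpa using hw 1 (by simp)
  simp_rw [e1]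
  rw [integral_finsetSum _ (fun i _ => (hint (τ i)).const_mul _)]
  have : ∀ i ∈ Finset.range (2 * m + n + 1), ∫ x in closedBall 0 R, w i * ((1 + τ i • fderiv ℝ g x).det * (1 - ‖x + τ i • g x‖ ^ 2 / K) ^ m) = w i * ∫ x in closedBall (0 : EuclideanSpace ℝ (Fin n)) R, (1 - ‖x‖ ^ 2 / K) ^ m := by
    intro i hi
    rw [integral_const_mul, hsm (τ i) (hτ i hi).1 (hτ i hi).2 (fun y => (1 - ‖y‖ ^ 2 / K) ^ m)]
  rw [Finset.sum_congr rfl this, ← Finset.sum_mul, ← hw1, one_mul]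

theorem aux_smooth {n : ℕ} (g : EuclideanSpace ℝ (Fin n) → EuclideanSpace ℝ (Fin n))
    (hg : ContDiff ℝ 1 g) (R : ℝ) (hR : ∀ x, R < ‖x‖ → g x = 0) (c : ℝ) (hc : 0 < c)
    (hcR : c ≤ R) (hP : ∀ x, c ≤ ‖x + g x‖) : False := by
  have hc1 : Continuous (fderiv ℝ g) := hg.continuous_fderiv (by simp)
  have hc2 := hg.continuous
  have hc3 : Continuous fun x => (1 + fderiv ℝ g x).det :=
    ContinuousLinearMap.continuous_det.comp (by fun_prop)
  have hK := isCompact_closedBall (0 : EuclideanSpace ℝ (Fin n)) R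
  obtain ⟨D, hD⟩ := hK.exists_bound_of_continuousOn hc3.continuousOn
  obtain ⟨L, hL⟩ := hK.exists_bound_of_continuousOn
    (show Continuous fun x => x + g x by fun_prop).continuousOn
  have hD0 : 0 ≤ D := (norm_nonneg _).trans (hD 0 (by simp; linarith))
  set K : ℝ := max (L^2) (R^2) with hKdef
  have hRK : R^2 ≤ K := le_max_right _ _
  have hKpos : 0 < K := lt_of_lt_of_le (by nlinarith) hRK
  have hcK : c^2 ≤ K := le_trans (by nlinarith) hRK
  set a : ℝ := 1 - c^2/K with ha
  set b : ℝ := 1 - (c/2)^2/K with hb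
  have ha0 : 0 ≤ a := by rw [ha, sub_nonneg, div_le_one hKpos]; exact hcK
  have hab : a < b := by
    rw [ha, hb]; gcongr; linarith
  have hb0 : 0 < b := lt_of_le_of_lt ha0 hab
  set V : ℝ := volume.real (closedBall (0 : EuclideanSpace ℝ (Fin n)) R)
  set v : ℝ := volume.real (closedBall (0 : EuclideanSpace ℝ (Fin n)) (c/2))
  have hv : 0 < v := by
    apply ENNReal.toReal_pos
    · exact (measure_closedBall_pos volume _ (by positivity)).ne'
    · exact (isCompact_closedBall _ _).measure_lt_top.ne
  have hV : 0 ≤ V := measureReal_nonneg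
  have hmain : ∀ m : ℕ, v * b ^ m ≤ D * V * a ^ m := by
    intro m
    have heq := aux_one g hg R hR K m
    have hl : ‖∫ x in closedBall 0 R, (1 + fderiv ℝ g x).det * (1 - ‖x + g x‖ ^ 2 / K) ^ m‖
        ≤ (D * a ^ m) * V := by
      apply norm_setIntegral_le_of_norm_le_const hK.measure_lt_top
      intro x hx
      rw [norm_mul, norm_pow]
      have h1 : ‖x + g x‖ ^ 2 ≤ K := le_trans (by
        have := hL x hx
        have := norm_nonneg (x + g x)
        nlinarith) (le_max_left _ _)
      have h2 : 0 ≤ 1 - ‖x + g x‖ ^ 2 / K := by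
        rw [sub_nonneg, div_le_one hKpos]; exact h1
      rw [Real.norm_of_nonneg h2]
      have h3 : 1 - ‖x + g x‖ ^ 2 / K ≤ a := by
        rw [ha]; have := hP x; gcongr
      have := hD x hx
      gcongr
    have hcont : Continuous fun x : EuclideanSpace ℝ (Fin n) => (1 - ‖x‖ ^ 2 / K) ^ m := by fun_prop
    have hr : v * b ^ m ≤ ∫ x in closedBall (0 : EuclideanSpace ℝ (Fin n)) R, (1 - ‖x‖ ^ 2 / K) ^ m := by
      calc v * b ^ m = ∫ x in closedBall (0 : EuclideanSpace ℝ (Fin n)) (c/2), b ^ m := by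
            rw [setIntegral_const, smul_eq_mul]
        _ ≤ ∫ x in closedBall (0 : EuclideanSpace ℝ (Fin n)) (c/2), (1 - ‖x‖ ^ 2 / K) ^ m := by
            apply setIntegral_mono_on
            · exact continuous_const.continuousOn.integrableOn_compact (isCompact_closedBall _ _)
            · exact hcont.continuousOn.integrableOn_compact (isCompact_closedBall _ _)
            · exact isClosed_closedBall.measurableSet
            · intro x hx
              have hx' : ‖x‖ ≤ c/2 := by simpa using hx
              rw [hb] at hb0 ⊢
              gcongr
        _ ≤ _ := by
            apply setIntegral_mono_set
            · exact hcont.continuousOn.integrableOn_compact (isCompact_closedBall _ _)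
            · refine (ae_restrict_iff' isClosed_closedBall.measurableSet).2 (Eventually.of_forall ?_)
              intro x hx
              have hx' : ‖x‖ ≤ R := by simpa using hx
              apply pow_nonneg
              rw [sub_nonneg, div_le_one hKpos]
              exact le_trans (by gcongr) hRK
            · exact (closedBall_subset_closedBall (by linarith)).eventuallyLE
    rw [← heq] at hr
    have := (le_abs_self _).trans hl
    linarith
  obtain ⟨m, hm⟩ := exists_pow_lt_of_lt_one (show 0 < v / (D * V + 1) by positivity)
    (show a / b < 1 by rw [div_lt_one hb0]; exact hab)
  rw [div_pow, div_lt_div_iff₀ (by positivity) (by positivity)] at hm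
  have := hmain m
  have : 0 ≤ a ^ m := by positivity
  nlinarith

theorem aux_zero {n : ℕ} (h : EuclideanSpace ℝ (Fin n) → EuclideanSpace ℝ (Fin n))
    (hh : Continuous h) (r : ℝ) (hr : 0 < r) (hpos : ∀ x, r ≤ ‖x‖ → 0 < inner ℝ (h x) x) :
    ∃ x, h x = 0 := by
  by_contra hne
  push Not at hne
  let χ : EuclideanSpace ℝ (Fin n) → ℝ := fun x => max 0 (min 1 (r + 1 - ‖x‖))
  have hχ : Continuous χ := by fun_prop
  have hχ0 : ∀ x, 0 ≤ χ x := fun x => le_max_left _ _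
  have hχ1 : ∀ x, χ x ≤ 1 := fun x => max_le zero_le_one (min_le_left _ _)
  let g₀ : EuclideanSpace ℝ (Fin n) → EuclideanSpace ℝ (Fin n) := fun x => χ x • (h x - x)
  have hg₀ : Continuous g₀ := by fun_prop
  have hout : ∀ x, r + 1 < ‖x‖ → g₀ x = 0 := by
    intro x hx
    have : χ x = 0 := max_eq_left ((min_le_right _ _).trans (by linarith))
    simp [g₀, this]
  have hP : ∀ x, x + g₀ x ≠ 0 := by
    intro x hx
    have hx2 : χ x • h x + (1 - χ x) • x = 0 := by
      rw [← hx]; simp only [g₀]; module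
    rcases lt_or_ge ‖x‖ r with hlt | hge
    · have : χ x = 1 := by
        simp only [χ]
        rw [min_eq_left (by linarith)]; simp
      rw [this] at hx2
      exact hne x (by simpa using hx2)
    · have h2 : inner ℝ (χ x • h x + (1 - χ x) • x) x = 0 := by rw [hx2, inner_zero_left]
      rw [inner_add_left, real_inner_smul_left, real_inner_smul_left, real_inner_self_eq_norm_sq] at h2
      have h3 := hpos x hge
      have h4 : 0 < ‖x‖^2 := by have := hr.trans_le hge; positivity
      have h5 := hχ0 x
      have h6 := hχ1 x
      rcases h5.eq_or_lt with h7 | h7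
      · rw [← h7] at h2; linarith
      · have := mul_pos h7 h3
        have := mul_nonneg (sub_nonneg.2 h6) h4.le
        linarith
  have hPc : Continuous fun x => ‖x + g₀ x‖ := by fun_prop
  obtain ⟨x₀, -, hx₀⟩ := (isCompact_closedBall (0 : EuclideanSpace ℝ (Fin n)) (r+1)).exists_isMinOn
    ⟨0, by simp; linarith⟩ hPc.continuousOn
  set c := min ‖x₀ + g₀ x₀‖ (r + 1) with hc
  have hc0 : 0 < c := lt_min (norm_pos_iff.2 (hP x₀)) (by linarith)
  have hcP : ∀ x, c ≤ ‖x + g₀ x‖ := by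
    intro x
    rcases le_or_gt ‖x‖ (r+1) with h1 | h1
    · exact (min_le_left _ _).trans (hx₀ (by simpa using h1))
    · rw [hout x h1, add_zero]
      exact (min_le_right _ _).trans h1.le
  obtain ⟨g, hg1, hg2, hg3⟩ := hg₀.exists_contDiff_approx 1 (ε := fun _ => c / 2) continuous_const
    (fun _ => by positivity)
  refine aux_smooth g (by exact_mod_cast hg1) (r+1) (fun x hx => ?_) (c/2) (by positivity) ?_ (fun x => ?_)
  · by_contra h1
    exact hg3 h1 (hout x hx)
  · have : c ≤ r + 1 := min_le_right _ _
    linarith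
  · have h1 := hcP x
    have h2 := hg2 x
    rw [dist_eq_norm] at h2
    have h3 : ‖x + g₀ x‖ ≤ ‖x + g x‖ + ‖g x - g₀ x‖ := by
      have : x + g₀ x = (x + g x) - (g x - g₀ x) := by abel
      rw [this]; exact norm_sub_le _ _
    linarith

/-- finite-dimensional solvability -/
theorem aux_findim {G : Type*} [NormedAddCommGroup G] [NormedSpace ℝ G] [FiniteDimensional ℝ G]
    (T : G → G →ₗ[ℝ] ℝ) (hT : ∀ w, Continuous fun x => T x w) (R : ℝ)
    (hpos : ∀ x, R ≤ ‖x‖ → 0 < T x x) : ∃ x, T x = 0 := by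
  let e : G ≃L[ℝ] EuclideanSpace ℝ (Fin (Module.finrank ℝ G)) := toEuclidean
  let bs := EuclideanSpace.basisFun (Fin (Module.finrank ℝ G)) ℝ
  let h : EuclideanSpace ℝ (Fin (Module.finrank ℝ G)) → EuclideanSpace ℝ (Fin (Module.finrank ℝ G)) :=
    fun x => ∑ i, T (e.symm x) (e.symm (bs i)) • bs i
  have hh : Continuous h := by
    refine continuous_finsetSum _ fun i _ => ?_
    exact ((hT (e.symm (bs i))).comp e.symm.continuous).smul continuous_const
  have hin : ∀ x y, inner ℝ (h x) y = T (e.symm x) (e.symm y) := by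
    intro x y
    conv_rhs => rw [← bs.sum_repr' y]
    simp only [h, sum_inner, real_inner_smul_left, map_sum, map_smul, smul_eq_mul]
    exact Finset.sum_congr rfl fun i _ => mul_comm _ _
  obtain ⟨C, hC⟩ : ∃ C : ℝ, ∀ y, ‖e y‖ ≤ C * ‖y‖ := ⟨_, (e : G →L[ℝ] EuclideanSpace ℝ (Fin (Module.finrank ℝ G))).le_opNorm⟩
  obtain ⟨x, hx⟩ := aux_zero h hh (|C| * |R| + 1) (by positivity) (fun x hx => by
    rw [hin]
    apply hpos
    by_contra hlt
    push Not at hlt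
    have h1 := hC (e.symm x)
    rw [e.apply_symm_apply] at h1
    have h2 : C * ‖e.symm x‖ ≤ |C| * |R| := by
      have := le_abs_self C
      have := hlt.le.trans (le_abs_self R)
      gcongr
    linarith)
  refine ⟨e.symm x, ?_⟩
  ext w
  have := hin x (e w)
  rw [hx, inner_zero_left, e.symm_apply_apply] at this
  simpa using this.symm
end brouwer

section weak
variable {X : Type*} [NormedAddCommGroup X] [NormedSpace ℝ X]

theorem aux_ultra (hrefl : Function.Surjective (NormedSpace.inclusionInDoubleDual ℝ X))
    {ι : Type*} (U : Ultrafilter ι) (s : ι → X) (C : ℝ) (hs : ∀ i, ‖s i‖ ≤ C) :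
    ∃ x : X, ∀ f : StrongDual ℝ X, Tendsto (fun i => f (s i)) U (𝓝 (f x)) := by
  have h1 : ∀ f : StrongDual ℝ X, ∃ l ∈ Set.Icc (-(C * ‖f‖)) (C * ‖f‖),
      Tendsto (fun i => f (s i)) U (𝓝 l) := by
    intro f
    have hmem : ∀ i, f (s i) ∈ Set.Icc (-(C * ‖f‖)) (C * ‖f‖) := by
      intro i
      rw [Set.mem_Icc, ← abs_le, ← Real.norm_eq_abs]
      refine (f.le_opNorm _).trans ?_
      rw [mul_comm]
      exact mul_le_mul_of_nonneg_right (hs i) (norm_nonneg _)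
    obtain ⟨l, hl, hle⟩ := (isCompact_Icc (a := -(C * ‖f‖)) (b := C * ‖f‖)).ultrafilter_le_nhds
      (U.map fun i => f (s i)) (by
        rw [Filter.le_principal_iff]
        exact Filter.Eventually.of_forall (f := (U : Filter ι)) hmem)
    exact ⟨l, hl, hle⟩
  choose L hL hLt using h1
  let Λ : StrongDual ℝ X →ₗ[ℝ] ℝ :=
    { toFun := L
      map_add' := fun f g => tendsto_nhds_unique (hLt (f + g)) (by
        simpa using (hLt f).add (hLt g))
      map_smul' := fun c f => tendsto_nhds_unique (hLt (c • f)) (by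
        simpa using (hLt f).const_mul c) }
  obtain ⟨x, hx⟩ := hrefl (Λ.mkContinuous C fun f => by
    rw [Real.norm_eq_abs, abs_le]; exact hL f)
  refine ⟨x, fun f => ?_⟩
  have : f x = L f := by
    have := congrArg (fun φ => φ f) hx
    simpa [Λ] using this
  rw [this]
  exact hLt f

theorem aux_norming (T : Finset X) : ∃ F : Finset (StrongDual ℝ X),
    ∀ w ∈ Submodule.span ℝ (T : Set X), ∃ f ∈ F, ‖f‖ ≤ 1 ∧ ‖w‖ / 2 ≤ f w := by
  classical
  let W := Submodule.span ℝ (T : Set X)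
  have : FiniteDimensional ℝ W := FiniteDimensional.span_of_finite ℝ T.finite_toSet
  have : ProperSpace W := FiniteDimensional.proper ℝ W
  obtain ⟨t, -, htf, htc⟩ := (isCompact_sphere (0 : W) 1).finite_cover_balls
    (show (0:ℝ) < 1/4 by norm_num)
  choose d hd1 hd2 using fun y : X => exists_dual_vector'' ℝ y
  refine ⟨insert 0 (htf.toFinset.image fun y : W => d y), fun w hw => ?_⟩
  rcases eq_or_ne w 0 with rfl | hw0
  · exact ⟨0, by simp, by simp, by simp⟩
  have hn : 0 < ‖w‖ := norm_pos_iff.2 hw0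
  let w' : W := ‖w‖⁻¹ • ⟨w, hw⟩
  have hw' : w' ∈ Metric.sphere (0 : W) 1 := by
    simp [w', norm_smul, hn.ne']
  obtain ⟨y, hy, hyb⟩ := Set.mem_iUnion₂.1 (htc hw')
  refine ⟨d y, ?_, hd1 _, ?_⟩
  · refine Finset.mem_insert_of_mem (Finset.mem_image.2 ⟨y, by simpa using hy, rfl⟩)
  · have h1 : ‖(w' : X) - y‖ < 1/4 := by
      rw [Metric.mem_ball, dist_eq_norm] at hyb
      simpa using hyb
    have h2 : ‖(w' : X)‖ = 1 := by simpa using hw'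
    have h3 : |d y ((w' : X) - y)| < 1/4 := by
      have := (d (y : X)).le_opNorm ((w' : X) - y)
      rw [Real.norm_eq_abs] at this
      have := hd1 (y : X)
      have := norm_nonneg ((w' : X) - y)
      nlinarith
    rw [map_sub, hd2] at h3
    have h4 : ‖(w' : X)‖ - ‖(y : X)‖ ≤ ‖(w' : X) - y‖ := norm_sub_norm_le _ _
    have h5 := (abs_lt.1 h3).1
    simp only [RCLike.ofReal_real_eq_id, id_eq] at h5
    have h6 : 1/2 ≤ d y (w' : X) := by linarith
    have h7 : d y (w' : X) = ‖w‖⁻¹ * d y w := by simp [w']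
    rw [h7, inv_mul_eq_div, le_div_iff₀ hn] at h6
    linarith

theorem aux_seq (hrefl : Function.Surjective (NormedSpace.inclusionInDoubleDual ℝ X))
    (S : Set X) (C : ℝ) (hS : ∀ s ∈ S, ‖s‖ ≤ C) (u : X)
    (hu : ∀ (F : Finset (StrongDual ℝ X)) (ε : ℝ), 0 < ε → ∃ s ∈ S, ∀ f ∈ F, |f s - f u| < ε) :
    ∃ s : ℕ → X, (∀ n, s n ∈ S) ∧
      ∀ f : StrongDual ℝ X, Tendsto (fun n => f (s n)) atTop (𝓝 (f u)) := by
  classical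
  choose F hF using aux_norming (X := X)
  let F' : Finset X → Finset (StrongDual ℝ X) := fun T => T.powerset.biUnion F
  have hF' : ∀ T₁ T₂ : Finset X, T₁ ⊆ T₂ → ∀ f ∈ F T₁, f ∈ F' T₂ := fun T₁ T₂ h f hf =>
    Finset.mem_biUnion.2 ⟨T₁, Finset.mem_powerset.2 h, hf⟩
  choose pick hpS hpF using fun (n : ℕ) (T : Finset X) =>
    hu (F' T) (1 / ((n : ℝ) + 1)) (by positivity)
  obtain ⟨T, hT0, hTs⟩ : ∃ T : ℕ → Finset X, T 0 = {u} ∧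
      ∀ n, T (n+1) = insert (pick n (T n)) (T n) :=
    ⟨fun n => Nat.rec {u} (fun n T => insert (pick n T) T) n, rfl, fun n => rfl⟩
  have hTm : Monotone T := monotone_nat_of_le_succ fun n => by
    rw [hTs]; exact Finset.subset_insert _ _
  let s : ℕ → X := fun n => pick n (T n)
  refine ⟨s, fun n => hpS _ _, fun f => ?_⟩
  rw [tendsto_iff_ultrafilter]
  intro U hU
  obtain ⟨x, hx⟩ := aux_ultra hrefl U s C (fun n => hS _ (hpS _ _))
  suffices x = u by rw [← this]; exact hx f
  let Y : Submodule ℝ X := ⨆ n, Submodule.span ℝ ((T n : Finset X) : Set X)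
  have hdir : Directed (· ≤ ·) fun n => Submodule.span ℝ ((T n : Finset X) : Set X) :=
    (Monotone.directed_le fun m n h => Submodule.span_mono (by exact_mod_cast hTm h))
  have hTY : ∀ n, ∀ z ∈ T n, z ∈ Y := fun n z hz =>
    Submodule.mem_iSup_of_mem n (Submodule.subset_span hz)
  have hxY : x ∈ Y.topologicalClosure := by
    by_contra hxn
    obtain ⟨f, a, hfa, hfx⟩ := geometric_hahn_banach_closed_point
      (Y.topologicalClosure.convex) Y.isClosed_topologicalClosure hxn
    have : f x ≤ a := le_of_tendsto (hx f) (Eventually.of_forall fun n =>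
      (hfa _ (Y.le_topologicalClosure (hTY (n+1) _ (by rw [hTs]; exact Finset.mem_insert_self _ _)))).le)
    linarith
  have hyY : x - u ∈ Y.topologicalClosure :=
    sub_mem hxY (Y.le_topologicalClosure (hTY 0 u (by simp [hT0])))
  have hf0 : ∀ n, ∀ f ∈ F (T n), f (x - u) = 0 := by
    intro n f hf
    have h1 : Tendsto (fun k => f (s k) - f u) U (𝓝 0) := by
      refine Tendsto.mono_left ?_ hU
      refine squeeze_zero_norm' ?_ tendsto_one_div_add_atTop_nhds_zero_nat
      filter_upwards [eventually_ge_atTop n] with k hk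
      exact (hpF k (T k) f (hF' _ _ (hTm hk) f hf)).le
    have h2 := (hx f).sub_const (f u)
    rw [map_sub]
    exact tendsto_nhds_unique h2 h1
  by_contra hne
  have hpos : 0 < ‖x - u‖ := norm_pos_iff.2 (sub_ne_zero.2 hne)
  obtain ⟨z, hz, hzd⟩ := Metric.mem_closure_iff.1 hyY (‖x - u‖ / 8) (by positivity)
  obtain ⟨n, hn⟩ := (Submodule.mem_iSup_of_directed _ hdir).1 hz
  obtain ⟨f, hfF, hf1, hfz⟩ := hF (T n) z hn
  rw [dist_eq_norm] at hzd
  have h1 : |f (x - u - z)| ≤ ‖x - u - z‖ := by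
    have := f.le_opNorm (x - u - z)
    rw [Real.norm_eq_abs] at this
    have := norm_nonneg (x - u - z)
    nlinarith
  rw [map_sub, hf0 n f hfF] at h1
  have h2 := (abs_le.1 h1).1
  have h3 := norm_sub_norm_le (x - u) z
  linarith

theorem aux_demi (A : X → StrongDual ℝ X)
    (hpm : ∀ (u : ℕ → X) (u₀ : X),
      (∀ f : StrongDual ℝ X, Tendsto (fun n => f (u n)) atTop (𝓝 (f u₀))) →
      limsup (fun n => A (u n) (u n - u₀)) atTop ≤ 0 →
      ∀ v : X, A u₀ (u₀ - v) ≤ liminf (fun n => A (u n) (u n - v)) atTop)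
    (hbd : ∀ S : Set X, Bornology.IsBounded S → Bornology.IsBounded (A '' S))
    (w : X) : Continuous fun x => A x w := by
  apply SeqContinuous.continuous
  intro u u₀ hu
  obtain ⟨C, hC⟩ := (hbd _ (Metric.isBounded_range_of_tendsto u hu)).exists_norm_le
  have hC' : ∀ n, ‖A (u n)‖ ≤ C := fun n => hC _ ⟨u n, ⟨n, rfl⟩, rfl⟩
  have h0 : Tendsto (fun n => A (u n) (u n - u₀)) atTop (𝓝 0) := by
    have hd : Tendsto (fun n => C * ‖u n - u₀‖) atTop (𝓝 0) := by
      have := (tendsto_iff_norm_sub_tendsto_zero.1 hu).const_mul C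
      simpa using this
    refine squeeze_zero_norm (fun n => ?_) hd
    exact (A (u n)).le_of_opNorm_le (hC' n) _
  have hweak : ∀ f : StrongDual ℝ X, Tendsto (fun n => f (u n)) atTop (𝓝 (f u₀)) :=
    fun f => (f.continuous.tendsto u₀).comp hu
  have key : ∀ w : X, ∀ ε > 0, ∀ᶠ n in atTop, A u₀ w - ε < A (u n) w := by
    intro w ε hε
    have h1 := hpm u u₀ hweak h0.limsup_eq.le (u₀ - w)
    rw [sub_sub_cancel] at h1
    have hb : IsBoundedUnder (· ≥ ·) atTop (fun n => A (u n) (u n - (u₀ - w))) := by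
      obtain ⟨D, hD⟩ := (Metric.isBounded_range_of_tendsto u hu).exists_norm_le
      refine ⟨-(C * (D + ‖u₀ - w‖)), ?_⟩
      rw [eventually_map]
      refine Eventually.of_forall fun n => ?_
      have h2 : ‖A (u n) (u n - (u₀ - w))‖ ≤ C * (D + ‖u₀ - w‖) := by
        refine ((A (u n)).le_of_opNorm_le (hC' n) _).trans ?_
        have h3 : ‖u n - (u₀ - w)‖ ≤ D + ‖u₀ - w‖ :=
          (norm_sub_le _ _).trans (by gcongr; exact hD _ ⟨n, rfl⟩)
        exact mul_le_mul_of_nonneg_left h3 ((norm_nonneg _).trans (hC' 0))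
      rw [Real.norm_eq_abs] at h2
      exact (abs_le.1 h2).1
    have h2 := eventually_lt_of_lt_liminf (show A u₀ w - ε / 2 < _ by
      exact lt_of_lt_of_le (by linarith) h1) hb
    have h3 := h0.eventually (gt_mem_nhds (show (0:ℝ) < ε / 2 by positivity))
    filter_upwards [h2, h3] with n hn2 hn3
    have : u n - (u₀ - w) = (u n - u₀) + w := by abel
    rw [this, map_add] at hn2
    linarith
  rw [Metric.tendsto_atTop']
  intro ε hε
  have := (key w ε hε).and (key (-w) ε hε)
  obtain ⟨N, hN⟩ := eventually_atTop.1 this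
  refine ⟨N, fun n hn => ?_⟩
  obtain ⟨h1, h2⟩ := hN n hn.le
  simp only [map_neg] at h2
  simp only [Function.comp]
  rw [Real.dist_eq, abs_lt]
  constructor <;> linarith

end weak

/-- Theorem 2.10 (main theorem on pseudomonotone operators): if X is a real reflexive
Banach space and A : X → X* is pseudomonotone, bounded and coercive, then for every
b ∈ X* the equation A u = b has a solution. -/
theorem stmt_12 (X : Type*) [NormedAddCommGroup X] [NormedSpace ℝ X] [CompleteSpace X]
    (hrefl : Function.Surjective (NormedSpace.inclusionInDoubleDual ℝ X))
    (A : X → StrongDual ℝ X)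
    -- pseudomonotone
    (hpm : ∀ (u : ℕ → X) (u₀ : X),
      (∀ f : StrongDual ℝ X, Tendsto (fun n => f (u n)) atTop (𝓝 (f u₀))) →
      limsup (fun n => A (u n) (u n - u₀)) atTop ≤ 0 →
      ∀ v : X, A u₀ (u₀ - v) ≤ liminf (fun n => A (u n) (u n - v)) atTop)
    -- bounded: maps bounded sets to bounded sets
    (hbd : ∀ S : Set X, Bornology.IsBounded S → Bornology.IsBounded (A '' S))
    -- coercive: ⟨A u, u⟩ / ‖u‖ → +∞ as ‖u‖ → ∞
    (hco : ∀ M : ℝ, ∃ R : ℝ, ∀ u : X, R ≤ ‖u‖ → M ≤ A u u / ‖u‖)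
    (b : StrongDual ℝ X) :
    ∃ u : X, A u = b := by
  classical
  have hdemi := aux_demi A hpm hbd
  obtain ⟨R₀, hR₀⟩ := hco (‖b‖ + 1)
  set R := max R₀ 1
  have hpos : ∀ x : X, R ≤ ‖x‖ → 0 < A x x - b x := by
    intro x hx
    have h1 := hR₀ x ((le_max_left _ _).trans hx)
    have h2 : 0 < ‖x‖ := lt_of_lt_of_le one_pos ((le_max_right _ _).trans hx)
    rw [le_div_iff₀ h2] at h1
    have h3 := (le_abs_self _).trans (b.le_opNorm x)
    nlinarith
  have hgal : ∀ F : Finset X, ∃ x ∈ Submodule.span ℝ (F : Set X),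
      ∀ w ∈ Submodule.span ℝ (F : Set X), A x w = b w := by
    intro F
    let W := Submodule.span ℝ (F : Set X)
    have : FiniteDimensional ℝ W := FiniteDimensional.span_of_finite ℝ F.finite_toSet
    obtain ⟨x, hx⟩ := aux_findim (G := W)
      (fun x => ((A x - b : StrongDual ℝ X) : X →ₗ[ℝ] ℝ).comp W.subtype)
      (fun w => by
        have := ((hdemi (w : X)).comp continuous_subtype_val).sub (continuous_const (y := b (w : X)) (X := W))
        exact this) R (fun x hx => hpos x hx)
    refine ⟨x, x.2, fun w hw => ?_⟩
    have := LinearMap.congr_fun hx ⟨w, hw⟩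
    exact sub_eq_zero.1 this
  choose g hgm hg using hgal
  have hgR : ∀ F, ‖g F‖ ≤ R := by
    intro F
    by_contra hlt
    push Not at hlt
    have := hpos (g F) hlt.le
    rw [hg F _ (hgm F)] at this
    linarith
  let U : Ultrafilter (Finset X) := Ultrafilter.of atTop
  have hU : (U : Filter (Finset X)) ≤ atTop := Ultrafilter.of_le _
  obtain ⟨u, hu⟩ := aux_ultra hrefl U g R hgR
  have hmain : ∀ v, A u (u - v) ≤ b (u - v) := by
    intro v
    obtain ⟨s, hsS, hs⟩ := aux_seq hrefl (g '' {F : Finset X | {u, v} ⊆ F}) R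
      (by rintro _ ⟨F, -, rfl⟩; exact hgR F) u (by
        intro Φ ε hε
        have h1 : ∀ᶠ F in (U : Filter (Finset X)), {u, v} ⊆ F :=
          hU (eventually_ge_atTop ({u, v} : Finset X))
        have h2 : ∀ᶠ F in (U : Filter (Finset X)), ∀ f ∈ Φ, |f (g F) - f u| < ε := by
          rw [Finset.eventually_all]
          intro f _
          exact (Metric.tendsto_nhds.1 (hu f) ε hε)
        obtain ⟨F, hF1, hF2⟩ := (h1.and h2).exists
        exact ⟨g F, ⟨F, hF1, rfl⟩, hF2⟩)
    have hsv : ∀ n, A (s n) (s n - u) = b (s n - u) ∧ A (s n) (s n - v) = b (s n - v) := by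
      intro n
      obtain ⟨F, hF, hFs⟩ := hsS n
      rw [← hFs]
      have hu' : u ∈ Submodule.span ℝ (F : Set X) := Submodule.subset_span (hF (by simp))
      have hv' : v ∈ Submodule.span ℝ (F : Set X) := Submodule.subset_span (hF (by simp))
      exact ⟨hg F _ (sub_mem (hgm F) hu'), hg F _ (sub_mem (hgm F) hv')⟩
    have hlim : ∀ z, Tendsto (fun n => b (s n - z)) atTop (𝓝 (b (u - z))) := by
      intro z
      simpa using (hs b).sub_const (b z)
    have h1 := hpm s u hs (by
      simp only [fun n => (hsv n).1]
      rw [(hlim u).limsup_eq]; simp) v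
    simp only [fun n => (hsv n).2] at h1
    rwa [(hlim v).liminf_eq] at h1
  refine ⟨u, ?_⟩
  ext w
  have h1 := hmain (u - w)
  have h2 := hmain (u + w)
  rw [sub_sub_cancel] at h1
  rw [sub_add_cancel_left, map_neg, map_neg] at h2
  linarith
end

section
/- Let u̲, ū : Ω → ℝ be measurable functions with ∫_Ω |u̲(x)|^{q(x)} dx < ∞, ∫_Ω |ū(x)|^{q(x)} dx < ∞, and u̲(x) ≤ ū(x) for a.e. x ∈ Ω. Define the cut-off function b : Ω × ℝ → ℝ by b(x,s) = (s − ū(x))^{q(x)−1} if s > ū(x), b(x,s) = 0 if u̲(x) ≤ s ≤ ū(x), and b(x,s) = −(u̲(x) − s)^{q(x)−1} if s < u̲(x). Then there exist positive constants â and b̂ such that ∫_Ω b(x, u(x)) u(x) dx ≥ â ∫_Ω |u(x)|^{q(x)} dx − b̂ for every u ∈ L^{q(·)}(Ω). (Coercivity estimate (3.4) for the cut-off functions in the proof of Theorem 3.1.) -/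
open MeasureTheory Filter Topology
open scoped ENNReal

lemma aux_pow {t r : ℝ} (ht : 0 ≤ t) (hr : 1 < r) : t ^ (r - 1) * t = t ^ r := by
  have h := Real.rpow_add_of_nonneg ht (by linarith : 0 ≤ r - 1) (zero_le_one)
  rw [Real.rpow_one, sub_add_cancel] at h
  exact h.symm

lemma aux_abs {l m s r M : ℝ} (hr : 1 < r) (hl : |l| ≤ M) (hm : |m| ≤ M) :
    |(if m < s then (s - m) ^ (r - 1) else if s < l then -((l - s) ^ (r - 1)) else 0) * s|
      ≤ (|s| + M) ^ r := by
  have hM : 0 ≤ M := (abs_nonneg l).trans hl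
  have hT : 0 ≤ |s| + M := by positivity
  rw [abs_mul, ← aux_pow hT hr]
  have h0 : 0 ≤ (|s| + M) ^ (r - 1) := by positivity
  refine mul_le_mul ?_ (by linarith) (abs_nonneg s) h0
  have := abs_le.1 hl
  have := abs_le.1 hm
  have := le_abs_self s
  have := neg_abs_le s
  split_ifs with h1 h2
  · rw [abs_of_nonneg (Real.rpow_nonneg (by linarith) _)]
    exact Real.rpow_le_rpow (by linarith) (by linarith) (by linarith)
  · rw [abs_neg, abs_of_nonneg (Real.rpow_nonneg (by linarith) _)]
    exact Real.rpow_le_rpow (by linarith) (by linarith) (by linarith)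
  · simpa using h0

lemma aux_mul_pow {c t r Q : ℝ} (hc : 1 ≤ c) (ht : 0 ≤ t) (hQ : r ≤ Q) :
    (c * t) ^ r ≤ c ^ Q * t ^ r := by
  rw [Real.mul_rpow (by linarith) ht]
  have := Real.rpow_le_rpow_of_exponent_le hc hQ
  gcongr

lemma aux_max {a b r : ℝ} (ha : 0 ≤ a) (hb : 0 ≤ b) : (max a b) ^ r ≤ a ^ r + b ^ r := by
  have := Real.rpow_nonneg ha r
  have := Real.rpow_nonneg hb r
  rcases max_choice a b with h | h <;> rw [h] <;> linarith

lemma aux_upper {l m s r Q : ℝ} (hr : 1 < r) (hQ : r ≤ Q) :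
    |(if m < s then (s - m) ^ (r - 1) else if s < l then -((l - s) ^ (r - 1)) else 0) * s|
      ≤ 2 ^ Q * (|s| ^ r + (|l| ^ r + |m| ^ r)) := by
  have hM0 : 0 ≤ max |l| |m| := le_max_of_le_left (abs_nonneg l)
  refine (aux_abs hr (le_max_left |l| |m|) (le_max_right |l| |m|)).trans ?_
  have h1 : |s| + max |l| |m| ≤ 2 * max |s| (max |l| |m|) := by
    linarith [le_max_left |s| (max |l| |m|), le_max_right |s| (max |l| |m|)]
  refine (Real.rpow_le_rpow (by positivity) h1 (by linarith)).trans ?_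
  refine (aux_mul_pow (by norm_num) (by positivity) hQ).trans ?_
  have h2 := aux_max (r := r) (abs_nonneg s) hM0
  have h3 := aux_max (r := r) (abs_nonneg l) (abs_nonneg m)
  have : (0:ℝ) ≤ 2 ^ Q := by positivity
  exact mul_le_mul_of_nonneg_left (by linarith) this

lemma aux_big {t d r Q : ℝ} (hr : 1 < r) (hQ : r ≤ Q) (ht : 0 ≤ t) (hd : t / 2 ≤ d) :
    (2 ^ Q)⁻¹ * t ^ r ≤ d ^ (r - 1) * t := by
  have h1 : (t / 2) ^ r ≤ d ^ (r - 1) * t := by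
    rw [← aux_pow (by linarith) hr]
    have h2 := Real.rpow_le_rpow (by linarith) hd (by linarith : 0 ≤ r - 1)
    exact mul_le_mul h2 (by linarith) (by linarith) (Real.rpow_nonneg (by linarith) _)
  have h3 : t ^ r ≤ 2 ^ Q * (t / 2) ^ r := by
    have := aux_mul_pow (c := 2) (t := t / 2) (by norm_num) (by linarith) hQ
    rwa [mul_div_cancel₀ t (by norm_num : (2:ℝ) ≠ 0)] at this
  have h4 : (0:ℝ) < 2 ^ Q := by positivity
  rw [inv_mul_le_iff₀ h4]
  exact h3.trans (mul_le_mul_of_nonneg_left h1 h4.le)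

lemma aux_lower {l m s r Q : ℝ} (hr : 1 < r) (hQ : r ≤ Q) :
    (2 ^ Q)⁻¹ * |s| ^ r - (3 ^ Q + 1) * (|l| ^ r + |m| ^ r) ≤
    (if m < s then (s - m) ^ (r - 1) else if s < l then -((l - s) ^ (r - 1)) else 0) * s := by
  set M := max |l| |m| with hMdef
  have hl : |l| ≤ M := le_max_left _ _
  have hm : |m| ≤ M := le_max_right _ _
  have hM : 0 ≤ M := (abs_nonneg l).trans hl
  have hMr : M ^ r ≤ |l| ^ r + |m| ^ r := aux_max (abs_nonneg l) (abs_nonneg m)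
  have h3 : (0:ℝ) < 3 ^ Q := by positivity
  have h4 : (0:ℝ) < 2 ^ Q := by positivity
  have hMr0 : 0 ≤ M ^ r := by positivity
  have hC : (3 ^ Q + 1) * M ^ r ≤ (3 ^ Q + 1) * (|l| ^ r + |m| ^ r) :=
    mul_le_mul_of_nonneg_left hMr (by linarith)
  have hC0 : 0 ≤ (3 ^ Q + 1) * M ^ r := by positivity
  have hl' := abs_le.1 hl
  have hm' := abs_le.1 hm
  rcases le_or_gt |s| (2 * M) with hs | hs
  · have ha := aux_abs (s := s) hr hl hm
    have hb := Real.rpow_le_rpow (by positivity) (by linarith : |s| + M ≤ 3 * M)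
      (by linarith : 0 ≤ r)
    have hc := aux_mul_pow (c := 3) (by norm_num) hM hQ
    have hd := Real.rpow_le_rpow (abs_nonneg s) hs (by linarith : 0 ≤ r)
    have he := aux_mul_pow (c := 2) (by norm_num) hM hQ
    have hf : (2 ^ Q)⁻¹ * |s| ^ r ≤ M ^ r := by
      rw [inv_mul_le_iff₀ h4]; linarith
    have := neg_abs_le ((if m < s then (s - m) ^ (r - 1)
      else if s < l then -((l - s) ^ (r - 1)) else 0) * s)
    linarith
  · rcases le_or_gt 0 s with h0 | h0
    · rw [abs_of_nonneg h0] at hs ⊢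
      rw [if_pos (by linarith)]
      have := aux_big (d := s - m) hr hQ h0 (by linarith)
      linarith
    · rw [abs_of_neg h0] at hs ⊢
      rw [if_neg (by linarith), if_pos (by linarith)]
      have := aux_big (t := -s) (d := l - s) hr hQ (by linarith) (by linarith)
      linarith

theorem stmt_16
    (N : ℕ) (hN : 2 ≤ N)
    (Ω : Set (Fin N → ℝ)) (hΩo : IsOpen Ω) (hΩb : Bornology.IsBounded Ω)
    (p q : (Fin N → ℝ) → ℝ)
    (hpc : ContinuousOn p (closure Ω)) (hqc : ContinuousOn q (closure Ω))
    (hpq : ∀ x ∈ closure Ω, 1 < p x ∧ p x < (N : ℝ) ∧ p x < q x ∧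
      q x < (N : ℝ) * p x / ((N : ℝ) - p x))
    (ul ub : (Fin N → ℝ) → ℝ) (hulm : Measurable ul) (hubm : Measurable ub)
    (hulq : (∫⁻ x in Ω, ENNReal.ofReal (|ul x| ^ q x)) < ⊤)
    (hubq : (∫⁻ x in Ω, ENNReal.ofReal (|ub x| ^ q x)) < ⊤)
    (hle : ∀ᵐ x ∂(volume.restrict Ω), ul x ≤ ub x)
    (b : (Fin N → ℝ) → ℝ → ℝ)
    (hb : b = fun x s =>
      if ub x < s then (s - ub x) ^ (q x - 1)
      else if s < ul x then -((ul x - s) ^ (q x - 1))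
      else 0)
    : ∃ ahat bhat : ℝ, 0 < ahat ∧ 0 < bhat ∧
      ∀ u : (Fin N → ℝ) → ℝ, Measurable u →
        (∫⁻ x in Ω, ENNReal.ofReal (|u x| ^ q x)) < ⊤ →
        ahat * (∫ x in Ω, |u x| ^ q x) - bhat ≤ ∫ x in Ω, b x (u x) * u x := by
  have hΩm : MeasurableSet Ω := hΩo.measurableSet
  have hcomp : IsCompact (closure Ω) := hΩb.isCompact_closure
  obtain ⟨Q, hQ⟩ := hcomp.bddAbove_image hqc
  have hQ' : ∀ x ∈ Ω, 1 < q x ∧ q x ≤ Q := fun x hx => by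
    have hx' := subset_closure hx
    have := hpq x hx'
    exact ⟨by linarith [this.1, this.2.2.1], hQ ⟨x, hx', rfl⟩⟩
  have hqm : AEMeasurable q (volume.restrict Ω) :=
    (hqc.mono subset_closure).aemeasurable hΩm
  have hint : ∀ u : (Fin N → ℝ) → ℝ, Measurable u →
      (∫⁻ x in Ω, ENNReal.ofReal (|u x| ^ q x)) < ⊤ →
      Integrable (fun x => |u x| ^ q x) (volume.restrict Ω) := by
    intro u hu hfin
    refine ⟨(AEMeasurable.pow (by fun_prop) hqm).aestronglyMeasurable, ?_⟩
    rw [hasFiniteIntegral_iff_ofReal]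
    · exact hfin
    · exact ae_of_all _ fun x => Real.rpow_nonneg (abs_nonneg _) _
  have hil := hint ul hulm hulq
  have hiu := hint ub hubm hubq
  have hw : Integrable (fun x => |ul x| ^ q x + |ub x| ^ q x) (volume.restrict Ω) := hil.add hiu
  have hw0 : 0 ≤ ∫ x in Ω, (|ul x| ^ q x + |ub x| ^ q x) :=
    integral_nonneg fun x => add_nonneg (Real.rpow_nonneg (abs_nonneg _) _)
      (Real.rpow_nonneg (abs_nonneg _) _)
  refine ⟨(2 ^ Q)⁻¹, (3 ^ Q + 1) * (∫ x in Ω, (|ul x| ^ q x + |ub x| ^ q x)) + 1,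
    by positivity, by positivity, ?_⟩
  intro u hu hfin
  have hiuu := hint u hu hfin
  have hbm : AEStronglyMeasurable (fun x => b x (u x) * u x) (volume.restrict Ω) := by
    obtain ⟨q', hq'm, hq'⟩ := hqm
    refine AEMeasurable.aestronglyMeasurable ⟨fun x => (if ub x < u x then (u x - ub x) ^ (q' x - 1)
      else if u x < ul x then -((ul x - u x) ^ (q' x - 1)) else 0) * u x, ?_, ?_⟩
    · refine Measurable.mul (Measurable.ite (measurableSet_lt hubm hu) (by fun_prop)
        (Measurable.ite (measurableSet_lt hu hulm) (by fun_prop) measurable_const)) hu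
    · filter_upwards [hq'] with x hx
      simp only [hb, hx]
  have hbi : Integrable (fun x => b x (u x) * u x) (volume.restrict Ω) := by
    refine Integrable.mono' ((hiuu.add hw).const_mul (2 ^ Q)) hbm ?_
    filter_upwards [ae_restrict_mem hΩm] with x hx
    rw [hb, Real.norm_eq_abs]
    exact aux_upper (hQ' x hx).1 (hQ' x hx).2
  have key : ∫ x in Ω, ((2 ^ Q)⁻¹ * |u x| ^ q x - (3 ^ Q + 1) * (|ul x| ^ q x + |ub x| ^ q x))
      ≤ ∫ x in Ω, b x (u x) * u x := by
    refine integral_mono_ae ((hiuu.const_mul _).sub (hw.const_mul _)) hbi ?_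
    filter_upwards [ae_restrict_mem hΩm] with x hx
    rw [hb]
    exact aux_lower (hQ' x hx).1 (hQ' x hx).2
  rw [integral_sub (hiuu.const_mul _) (hw.const_mul _), integral_const_mul,
    integral_const_mul] at key
  linarith
end

section
/- Let N ≥ 1, let p, q ∈ ℝ with 1 < p and 1 < q, and let μ ≥ 0. Define a : ℝ^N → ℝ^N by a(ξ) = |ξ|^{p−2} ξ + μ |ξ|^{q−2} ξ for ξ ≠ 0 and a(0) = 0. Then a is strictly monotone: (a(ξ) − a(η)) · (ξ − η) > 0 for all ξ, η ∈ ℝ^N with ξ ≠ η. (Pointwise strict monotonicity of the double phase integrand, the core of the strict monotonicity assertion of Proposition 2.3 for the variable exponent double phase operator.) -/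
open scoped RealInnerProductSpace

theorem aux_mono {E : Type*} [NormedAddCommGroup E] [InnerProductSpace ℝ E] (s : ℝ) (hs : 1 < s)
    (x y : E) (hxy : x ≠ y) :
    0 < ⟪(‖x‖ ^ (s - 2)) • x - (‖y‖ ^ (s - 2)) • y, x - y⟫ := by
  have key : ∀ r : ℝ, 0 ≤ r → r ^ (s - 2) * r = r ^ (s - 1) := by
    intro r hr
    rcases hr.eq_or_lt with h | h
    · rw [← h, Real.zero_rpow (by linarith : s - 1 ≠ 0), mul_zero]
    · rw [← Real.rpow_add_one h.ne']
      congr 1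
      ring
  have hx := norm_nonneg x
  have hy := norm_nonneg y
  have kx := key _ hx
  have ky := key _ hy
  have hA : 0 ≤ ‖x‖ ^ (s - 2) := Real.rpow_nonneg hx _
  have hB : 0 ≤ ‖y‖ ^ (s - 2) := Real.rpow_nonneg hy _
  have ht : ⟪x, y⟫ ≤ ‖x‖ * ‖y‖ := real_inner_le_norm x y
  have hd : 0 < ‖x - y‖ := norm_pos_iff.mpr (sub_ne_zero.mpr hxy)
  have hd2 := norm_sub_sq_real x y
  have e : ⟪(‖x‖ ^ (s - 2)) • x - (‖y‖ ^ (s - 2)) • y, x - y⟫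
      = (‖x‖ ^ (s - 1) - ‖y‖ ^ (s - 1)) * (‖x‖ - ‖y‖)
        + (‖x‖ ^ (s - 2) + ‖y‖ ^ (s - 2)) * (‖x‖ * ‖y‖ - ⟪x, y⟫) := by
    rw [← kx, ← ky]
    simp only [inner_sub_left, inner_sub_right, real_inner_smul_left,
      real_inner_self_eq_norm_sq, real_inner_comm x y]
    ring
  rw [e]
  have h2 : 0 ≤ (‖x‖ ^ (s - 2) + ‖y‖ ^ (s - 2)) * (‖x‖ * ‖y‖ - ⟪x, y⟫) :=
    mul_nonneg (by linarith) (by linarith)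
  rcases lt_trichotomy ‖x‖ ‖y‖ with h | h | h
  · have := Real.rpow_lt_rpow hx h (by linarith : 0 < s - 1)
    have := mul_pos_of_neg_of_neg (sub_neg.mpr this) (sub_neg.mpr h)
    linarith
  · have hpos : 0 < ‖y‖ := by
      rcases hy.eq_or_lt with h0 | h0
      · exfalso
        apply hxy
        rw [norm_eq_zero.mp (h.trans h0.symm), norm_eq_zero.mp h0.symm]
      · exact h0
    rw [h] at hd2 ⊢
    have hB' : 0 < ‖y‖ ^ (s - 2) := Real.rpow_pos_of_pos hpos _
    have : 0 < ‖y‖ * ‖y‖ - ⟪x, y⟫ := by nlinarith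
    have := mul_pos (add_pos hB' hB') this
    linarith
  · have := Real.rpow_lt_rpow hy h (by linarith : 0 < s - 1)
    have := mul_pos (sub_pos.mpr this) (sub_pos.mpr h)
    linarith

/-- Pointwise strict monotonicity of the double phase integrand
a(ξ) = |ξ|^{p−2} ξ + μ |ξ|^{q−2} ξ (a(0) = 0). -/
theorem stmt_18
    (N : ℕ) (hN : 1 ≤ N) (p q μ : ℝ) (hp : 1 < p) (hq : 1 < q) (hμ : 0 ≤ μ)
    (a : EuclideanSpace ℝ (Fin N) → EuclideanSpace ℝ (Fin N))
    (ha0 : a 0 = 0)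
    (ha : ∀ ξ : EuclideanSpace ℝ (Fin N), ξ ≠ 0 →
      a ξ = (‖ξ‖ ^ (p - 2)) • ξ + (μ * ‖ξ‖ ^ (q - 2)) • ξ) :
    ∀ ξ η : EuclideanSpace ℝ (Fin N), ξ ≠ η → 0 < ⟪a ξ - a η, ξ - η⟫ := by
  intro ξ η h
  have ha' : ∀ ξ, a ξ = (‖ξ‖ ^ (p - 2)) • ξ + (μ * ‖ξ‖ ^ (q - 2)) • ξ := by
    intro ξ
    by_cases h0 : ξ = 0
    · rw [h0, ha0]; simp
    · exact ha ξ h0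
  have h1 := aux_mono p hp ξ η h
  have h2 := mul_nonneg hμ (aux_mono q hq ξ η h).le
  rw [← real_inner_smul_left] at h2
  have e : a ξ - a η = ((‖ξ‖ ^ (p - 2)) • ξ - (‖η‖ ^ (p - 2)) • η)
      + μ • ((‖ξ‖ ^ (q - 2)) • ξ - (‖η‖ ^ (q - 2)) • η) := by
    rw [ha' ξ, ha' η, smul_sub, smul_smul, smul_smul]
    abel
  rw [e, inner_add_left]
  linarith
end
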